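/- Let P be a partial profile over a finite set A of alternatives, B a partial agenda over A, and p ∈ A. Then p is a necessary successive winner of (P, B) if and only if both of the following hold: (i) in every completion P* of P, p is an (A ∖ Prec_B(p))-majority winner; and (ii) for every alternative c ∈ Prec_B(p) and every completion P* of P, c is not a (Succ_B(c) ∪ {c})-majority winner. -/

import Mathlib

open scoped Classical

/-- The number of voters in profile `prof` who strictly prefer `b` to `c`. -/
noncomputable def prefCount {α : Type*} {n : ℕ} (prof : Fin n → α → α → Prop) (b c : α) : ℕ :=
  (Finset.univ.filter fun i => prof i b c).card

/-- Alternative `b` beats alternative `c`: more than `n/2` voters prefer `b` to `c`. -/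
def Beats {α : Type*} {n : ℕ} (prof : Fin n → α → α → Prop) (b c : α) : Prop :=
  2 * prefCount prof b c > n

/-- `a` is an `S`-majority winner: more than `n/2` voters prefer `a`
to every alternative of `S \ {a}`. -/
def IsMajWinner {α : Type*} {n : ℕ} (prof : Fin n → α → α → Prop) (S : Finset α) (a : α) :
    Prop :=
  2 * (Finset.univ.filter fun i => ∀ c ∈ S, c ≠ a → prof i a c).card > n

/-- The successive winner for the agenda given as a list: the first alternative of the
agenda that is a majority winner with respect to itself and all later alternatives. -/
noncomputable def succWinner {α : Type*} [DecidableEq α] {n : ℕ}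
    (prof : Fin n → α → α → Prop) : List α → Option α
  | [] => none
  | a :: rest =>
    if IsMajWinner prof ((a :: rest).toFinset) a then some a
    else succWinner prof rest

/-- The amendment winner for the agenda given as a list: the current round winner is
challenged by the next alternative on the agenda, which takes over if it beats it. -/
noncomputable def amendWinner {α : Type*} {n : ℕ}
    (prof : Fin n → α → α → Prop) : List α → Option α
  | [] => none
  | a :: rest => some (rest.foldl (fun win c => if Beats prof c win then c else win) a)

/-- `comp` is a completion of the partial profile `prof`: every voter's strict partial
order is replaced by a linear (strict total) order extending it. -/
def Completes {α : Type*} {n : ℕ} (comp prof : Fin n → α → α → Prop) : Prop :=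
  ∀ i, IsStrictTotalOrder α (comp i) ∧ ∀ x y, prof i x y → comp i x y

/-- `L` is a completion of the partial agenda `B`: `L` is an agenda (a linear order on all
alternatives, given as a duplicate-free exhaustive list) extending `B`. -/
def AgendaCompletes {α : Type*} [DecidableEq α] (L : List α) (B : α → α → Prop) : Prop :=
  L.Nodup ∧ (∀ a : α, a ∈ L) ∧ ∀ x y, B x y → L.idxOf x < L.idxOf y

/-- `Prec L p`: the set of alternatives ordered before `p` by the agenda `L`. -/
noncomputable def PrecL {α : Type*} [Fintype α] [DecidableEq α] (L : List α) (p : α) :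
    Finset α :=
  Finset.univ.filter fun c => L.idxOf c < L.idxOf p

/-- `Succ L p`: the set of alternatives ordered after `p` by the agenda `L`. -/
noncomputable def SuccL {α : Type*} [Fintype α] [DecidableEq α] (L : List α) (p : α) :
    Finset α :=
  Finset.univ.filter fun c => L.idxOf p < L.idxOf c

/-- `Prec B p` for a partial agenda `B` (a strict partial order on the alternatives):
the set of alternatives ordered before `p` by `B`. -/
noncomputable def PrecB {α : Type*} [Fintype α] (B : α → α → Prop) (p : α) : Finset α :=
  Finset.univ.filter fun c => B c p

/-- `Succ B p` for a partial agenda `B`: the set of alternatives ordered after `p`. -/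
noncomputable def SuccB {α : Type*} [Fintype α] (B : α → α → Prop) (p : α) : Finset α :=
  Finset.univ.filter fun c => B p c

/-!
Fix a complete profile. Under a single agenda, `p` wins iff `p` is a majority winner among the
alternatives not before it, while no `c` before `p` is one among `c` and the alternatives after `c`.
Being a majority winner is antitone in the set of competitors, and a partial agenda `B` has a
completion in which exactly `Prec_B(p)` comes before `p`, and, for each `c`, one in which exactly
`Succ_B(c)` comes after `c`; these two extreme agendas give (i) and (ii). Conversely, an alternative
which precedes `p` in a completion without `B` requiring it cannot stop the procedure before `p`:
it is one of the competitors of `p` in (i) and vice versa, and two majorities share a voter.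

The extreme agendas list a `B`-lower set first: `Prec_B(p)` together with `p`, respectively all
alternatives except `c` and `Succ_B(c)`.
-/

section MajorityWinner

variable {α : Type*} {n : ℕ} {prof : Fin n → α → α → Prop} {S T : Finset α} {a b : α}

theorem IsMajWinner.mono (hST : S ⊆ T) (h : IsMajWinner prof T a) : IsMajWinner prof S a := by
  have hcard : (Finset.univ.filter fun i => ∀ c ∈ T, c ≠ a → prof i a c).card ≤
      (Finset.univ.filter fun i => ∀ c ∈ S, c ≠ a → prof i a c).card :=
    Finset.card_le_card <| Finset.monotone_filter_right _ fun _ _ hi c hc => hi c (hST hc)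
  unfold IsMajWinner at *
  omega

theorem IsMajWinner.eq_of_mem_of_mem [∀ i, Std.Asymm (prof i)] (ha : IsMajWinner prof S a)
    (hb : IsMajWinner prof T b) (hbS : b ∈ S) (haT : a ∈ T) : a = b := by
  by_contra hab
  unfold IsMajWinner at ha hb
  obtain ⟨i, hi⟩ : ((Finset.univ.filter fun i => ∀ c ∈ S, c ≠ a → prof i a c) ∩
      (Finset.univ.filter fun i => ∀ c ∈ T, c ≠ b → prof i b c)).Nonempty := by
    apply Finset.inter_nonempty_of_card_lt_card_add_card (Finset.subset_univ _)
      (Finset.subset_univ _)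
    rw [Finset.card_univ, Fintype.card_fin]
    omega
  simp only [Finset.mem_inter, Finset.mem_filter, Finset.mem_univ, true_and] at hi
  exact asymm_of (prof i) (hi.1 b hbS (Ne.symm hab)) (hi.2 a haT hab)

end MajorityWinner

section IdxOf

variable {α : Type*} [DecidableEq α] {l : List α} {x y : α}

theorem mem_drop_iff_le_idxOf (hl : l.Nodup) {k : ℕ} : x ∈ l.drop k ↔ x ∈ l ∧ k ≤ l.idxOf x := by
  induction l generalizing k with
  | nil => simp
  | cons a l ih => cases k <;> grind

theorem idxOf_lt_idxOf_of_pairwise {r : α → α → Prop} [Std.Antisymm r] (hl : l.Pairwise r)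
    (hx : x ∈ l) (hy : y ∈ l) (hxy : r x y) (hne : x ≠ y) : l.idxOf x < l.idxOf y := by
  by_contra! hle
  have hlt : l.idxOf y < l.idxOf x := hle.lt_of_ne fun h => hne ((List.idxOf_inj hy).mp h).symm
  have hyx := List.pairwise_iff_getElem.mp hl _ _ (List.idxOf_lt_length_iff.mpr hy)
    (List.idxOf_lt_length_iff.mpr hx) hlt
  rw [List.getElem_idxOf, List.getElem_idxOf] at hyx
  exact hne (antisymm_of r hxy hyx)

end IdxOf

theorem succWinner_eq_some_iff_drop {α : Type*} [DecidableEq α] {n : ℕ}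
    (prof : Fin n → α → α → Prop) {L : List α} (hL : L.Nodup) (p : α) :
    succWinner prof L = some p ↔ p ∈ L ∧ IsMajWinner prof (L.drop (L.idxOf p)).toFinset p ∧
      ∀ c ∈ L, L.idxOf c < L.idxOf p → ¬ IsMajWinner prof (L.drop (L.idxOf c)).toFinset c := by
  induction L with
  | nil => simp [succWinner]
  | cons a L ih =>
    obtain ⟨haL, hLtail⟩ := List.nodup_cons.mp hL
    have idxOf_tail {c : α} (hca : c ≠ a) : (a :: L).idxOf c = L.idxOf c + 1 :=
      List.idxOf_cons_ne _ hca.symm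
    rw [succWinner]
    rcases eq_or_ne p a with rfl | hpa
    · have hp : succWinner prof L ≠ some p := fun h => haL ((ih hLtail).mp h).1
      simp [hp]
    · have tail_losers : (∀ c ∈ L, (a :: L).idxOf c < (a :: L).idxOf p →
            ¬ IsMajWinner prof ((a :: L).drop ((a :: L).idxOf c)).toFinset c) ↔
          ∀ c ∈ L, L.idxOf c < L.idxOf p →
            ¬ IsMajWinner prof (L.drop (L.idxOf c)).toFinset c :=
        forall₂_congr fun c hc => by
          rw [idxOf_tail hpa, idxOf_tail (ne_of_mem_of_not_mem hc haL), Nat.succ_lt_succ_iff,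
            List.drop_succ_cons]
      rw [List.forall_mem_cons, tail_losers, idxOf_tail hpa, List.idxOf_cons_self,
        List.drop_succ_cons, List.drop_zero, List.mem_cons, or_iff_right hpa]
      by_cases hwin : IsMajWinner prof (a :: L).toFinset a
      · simp only [hwin, hpa.symm, if_true, Option.some.injEq, Nat.succ_pos, not_true_eq_false,
          imp_false, false_and, and_false]
      · simp only [hwin, ih hLtail, if_false, not_false_eq_true, implies_true, true_and]

section LinearExtension

variable {α : Type*} [Finite α] [DecidableEq α]

theorem exists_agendaCompletes (R : α → α → Prop) [IsStrictOrder α R] :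
    ∃ L : List α, AgendaCompletes L R := by
  cases nonempty_fintype α
  let := partialOrderOfSO R
  obtain ⟨s, hs, hRs⟩ := extend_partialOrder (α := α) (· ≤ ·)
  refine ⟨Finset.univ.sort s, Finset.sort_nodup _ _, by simp, fun x y hxy => ?_⟩
  have hlt : x < y := hxy
  exact idxOf_lt_idxOf_of_pairwise (Finset.pairwise_sort _ _) (by simp) (by simp)
    (hRs x y hlt.le) hlt.ne

theorem exists_agendaCompletes_idxOf_lt_of_mem_of_notMem {B : α → α → Prop}
    [IsStrictOrder α B] {U : Set α} (hU : ∀ x y, B x y → y ∈ U → x ∈ U) :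
    ∃ L : List α, AgendaCompletes L B ∧ ∀ x ∈ U, ∀ y ∉ U, L.idxOf x < L.idxOf y := by
  have : IsStrictOrder α fun x y => B x y ∨ (x ∈ U ∧ y ∉ U) :=
    { irrefl := by
        rintro x (h | ⟨hx, hx'⟩)
        exacts [irrefl_of B x h, hx' hx]
      trans := by
        rintro x y z (hxy | ⟨hx, hy⟩) (hyz | ⟨hy', hz⟩)
        exacts [Or.inl (trans_of B hxy hyz), Or.inr ⟨hU x y hxy hy', hz⟩,
          Or.inr ⟨hx, fun hz => hy (hU y z hyz hz)⟩, (hy hy').elim] }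
  obtain ⟨L, hnodup, hmem, hlt⟩ := exists_agendaCompletes fun x y => B x y ∨ (x ∈ U ∧ y ∉ U)
  exact ⟨L, ⟨hnodup, hmem, fun x y h => hlt x y (Or.inl h)⟩,
    fun x hx y hy => hlt x y (Or.inr ⟨hx, hy⟩)⟩

end LinearExtension

section Agenda

variable {α : Type*} [Fintype α]

@[simp]
theorem mem_precB {B : α → α → Prop} {c p : α} : c ∈ PrecB B p ↔ B c p := by
  simp [PrecB]

@[simp]
theorem mem_succB {B : α → α → Prop} {c p : α} : c ∈ SuccB B p ↔ B p c := by
  simp [SuccB]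

variable [DecidableEq α] {L : List α} {B : α → α → Prop} {c p : α}

@[simp]
theorem mem_precL : c ∈ PrecL L p ↔ L.idxOf c < L.idxOf p := by
  simp [PrecL]

@[simp]
theorem mem_succL : c ∈ SuccL L p ↔ L.idxOf p < L.idxOf c := by
  simp [SuccL]

theorem univ_sdiff_precL (hc : c ∈ L) : Finset.univ \ PrecL L c = insert c (SuccL L c) := by
  ext d
  simp [le_iff_eq_or_lt, List.idxOf_inj hc, eq_comm]

theorem AgendaCompletes.precB_subset_precL (hL : AgendaCompletes L B) :
    PrecB B p ⊆ PrecL L p :=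
  fun c hc => mem_precL.mpr (hL.2.2 c p (mem_precB.mp hc))

theorem AgendaCompletes.succB_subset_succL (hL : AgendaCompletes L B) :
    SuccB B c ⊆ SuccL L c :=
  fun d hd => mem_succL.mpr (hL.2.2 c d (mem_succB.mp hd))

theorem AgendaCompletes.toFinset_drop_idxOf (hL : AgendaCompletes L B) (c : α) :
    (L.drop (L.idxOf c)).toFinset = Finset.univ \ PrecL L c := by
  ext d
  simp [mem_drop_iff_le_idxOf hL.1, hL.2.1]

theorem AgendaCompletes.succWinner_eq_some_iff {n : ℕ} {prof : Fin n → α → α → Prop}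
    (hL : AgendaCompletes L B) :
    succWinner prof L = some p ↔ IsMajWinner prof (Finset.univ \ PrecL L p) p ∧
      ∀ c ∈ PrecL L p, ¬ IsMajWinner prof (insert c (SuccL L c)) c := by
  simp only [succWinner_eq_some_iff_drop prof hL.1, hL.2.1, true_and, forall_const,
    hL.toFinset_drop_idxOf, mem_precL, univ_sdiff_precL (hL.2.1 _)]

theorem exists_agendaCompletes_precL_eq (B : α → α → Prop) [IsStrictOrder α B] (p : α) :
    ∃ L : List α, AgendaCompletes L B ∧ PrecL L p = PrecB B p := by
  obtain ⟨L, hL, hlt⟩ := exists_agendaCompletes_idxOf_lt_of_mem_of_notMem (B := B)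
    (U := {x | B x p ∨ x = p}) (by
      rintro x y hxy (hyp | rfl)
      exacts [Or.inl (trans_of B hxy hyp), Or.inl hxy])
  refine ⟨L, hL, Finset.Subset.antisymm (fun x hx => ?_) hL.precB_subset_precL⟩
  rw [mem_precL] at hx
  by_contra hxp
  have hxU : ¬ (B x p ∨ x = p) := by
    rintro (h | rfl)
    exacts [hxp (mem_precB.mpr h), lt_irrefl _ hx]
  exact lt_asymm hx (hlt p (Or.inr rfl) x hxU)

theorem exists_agendaCompletes_succL_eq (B : α → α → Prop) [IsStrictOrder α B] (c : α) :
    ∃ L : List α, AgendaCompletes L B ∧ SuccL L c = SuccB B c := by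
  obtain ⟨L, hL, hlt⟩ := exists_agendaCompletes_idxOf_lt_of_mem_of_notMem (B := B)
    (U := {x | ¬ (B c x ∨ x = c)}) (by
      rintro x y hxy hy (hcx | rfl)
      exacts [hy (Or.inl (trans_of B hcx hxy)), hy (Or.inl hxy)])
  refine ⟨L, hL, Finset.Subset.antisymm (fun x hx => ?_) hL.succB_subset_succL⟩
  rw [mem_succL] at hx
  by_contra hcx
  have hxU : ¬ (B c x ∨ x = c) := by
    rintro (h | rfl)
    exacts [hcx (mem_succB.mpr h), lt_irrefl _ hx]
  exact lt_asymm hx (hlt x hxU c (not_not_intro (Or.inr rfl)))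

end Agenda

theorem stmt16_general {α : Type*} [Fintype α] [DecidableEq α] {n : ℕ}
    (prof : Fin n → α → α → Prop) [∀ i, Std.Asymm (prof i)]
    (B : α → α → Prop) [IsStrictOrder α B] (p : α) :
    (∀ L : List α, AgendaCompletes L B → succWinner prof L = some p) ↔
      IsMajWinner prof (Finset.univ \ PrecB B p) p ∧
        ∀ c ∈ PrecB B p, ¬ IsMajWinner prof (insert c (SuccB B c)) c := by
  constructor
  · refine fun hwin => ⟨?_, fun c hc => ?_⟩
    · obtain ⟨L, hL, hprec⟩ := exists_agendaCompletes_precL_eq B p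
      rw [← hprec]
      exact (hL.succWinner_eq_some_iff.mp (hwin L hL)).1
    · obtain ⟨L, hL, hsucc⟩ := exists_agendaCompletes_succL_eq B c
      rw [← hsucc]
      exact (hL.succWinner_eq_some_iff.mp (hwin L hL)).2 c (hL.precB_subset_precL hc)
  · rintro ⟨hp, hnot⟩ L hL
    refine hL.succWinner_eq_some_iff.mpr
      ⟨hp.mono (Finset.sdiff_subset_sdiff subset_rfl hL.precB_subset_precL), fun c hcp hc => ?_⟩
    by_cases hcB : c ∈ PrecB B p
    · exact hnot c hcB (hc.mono (Finset.insert_subset_insert c hL.succB_subset_succL))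
    · have hlt := mem_precL.mp hcp
      have hpc : p = c := hp.eq_of_mem_of_mem hc (by simpa using hcB) (by simp [hlt])
      exact hlt.ne (congrArg L.idxOf hpc.symm)

/-- `p` is a necessary successive winner of the partial profile `prof` together with the
partial agenda `B` iff (i) in every completion of the profile, `p` is an
`(A ∖ Prec_B(p))`-majority winner, and (ii) for every `c ∈ Prec_B(p)` and every completion
of the profile, `c` is not a `(Succ_B(c) ∪ {c})`-majority winner. -/
theorem stmt16 {α : Type*} [Fintype α] [DecidableEq α] {n : ℕ}
    (prof : Fin n → α → α → Prop) (hpo : ∀ i, IsStrictOrder α (prof i))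
    (B : α → α → Prop) (hB : IsStrictOrder α B) (p : α) :
    (∀ (comp : Fin n → α → α → Prop) (L : List α),
        Completes comp prof → AgendaCompletes L B → succWinner comp L = some p) ↔
    ((∀ comp : Fin n → α → α → Prop, Completes comp prof →
        IsMajWinner comp (Finset.univ \ PrecB B p) p) ∧
      (∀ c ∈ PrecB B p, ∀ comp : Fin n → α → α → Prop, Completes comp prof →
        ¬ IsMajWinner comp (insert c (SuccB B c)) c)) := by
  have key (comp) (hcomp : Completes comp prof) :=
    have : ∀ i, IsStrictTotalOrder α (comp i) := fun i => (hcomp i).1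
    stmt16_general comp B p
  grind
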